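/- arXiv:2401.15811 — 3 statements merged into one kernel-verified Lean document; each statement's English description precedes it below -/
import Mathlib

section
/- Consider the naive seller-side experiment with feedback loops under a fixed partition {1,…,N} = 𝒯 ⊔ 𝒞, with ê_i^C(t) = ê_i^T(t) for all i and t, with a common pacing function Ψ^T = Ψ^C = Ψ, and under Assumptions 1–3 (monotonicity of f_i and Ψ, nonnegative outcomes, uniform treatment effect e_i^T(t) ≥ e_i^C(t) ≥ 0, continuity, and finitely many zero-crossing times of the threshold functions). Suppose the experiment dynamics, the global treatment dynamics, and the global control dynamics each admit solutions with common initial states S_i^{E}(0) = S_i^{GT}(0) = S_i^{GC}(0). Then for every seller i = 1,…,N and every t ∈ [0,H], ∫₀^t O_i^{E}(s) ds ≤ ∫₀^t O_i^{GT}(s) ds. -/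
/-!
Let `A` be the set of sellers whose experimental state exceeds the treatment state. Sellers in `A`
have scores no higher in the experiment and sellers outside `A` have scores at least as high, so the
thresholds summed over `A` are at most those of the treatment market; hence some seller in `A` has
an experimental threshold no larger than its treatment threshold. To the right of any time at which
all states are ordered, the thresholds keep constant signs for a while, because their zeros are
finite in number. Throughout this time that seller is therefore selected in the experiment only if
it is selected under treatment, so its state cannot have overtaken, a contradiction. The ordering
of the states thus propagates from time `0` to the whole interval.
-/

open Set Filter Topology MeasureTheory

theorem eventually_disjoint_Ioc_of_finite {α : Type*} [LinearOrder α] [TopologicalSpace α]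
    [ClosedIciTopology α] {s : Set α} (hs : s.Finite) (x : α) :
    ∀ᶠ u in 𝓝[>] x, Disjoint (Ioc x u) s := by
  have havoid : ∀ᶠ u in 𝓝[>] x, ∀ t ∈ s, t ∉ Ioc x u := by
    refine (eventually_all_finite hs).2 fun t _ => ?_
    rcases le_or_gt t x with htx | hxt
    · exact .of_forall fun u ht => htx.not_gt ht.1
    · filter_upwards [Ioo_mem_nhdsGT hxt] with u hu ht
      exact hu.2.not_ge ht.2
  filter_upwards [havoid] with u hu
  exact disjoint_right.2 hu

theorem le_of_isPreconnected_of_forall_ne {X α : Type*} [TopologicalSpace X] [LinearOrder α]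
    [TopologicalSpace α] [OrderClosedTopology α] {s : Set X} (hs : IsPreconnected s) {g : X → α}
    (hg : ContinuousOn g s) {c : α} (hne : ∀ z ∈ s, g z ≠ c) {x y : X} (hx : x ∈ s) (hy : y ∈ s)
    (hcx : c ≤ g x) : c ≤ g y := by
  by_contra! hyc
  obtain ⟨z, hz, hzc⟩ := hs.intermediate_value hy hx hg ⟨hyc.le, hcx⟩
  exact hne z hz hzc

/-- Assumption 1.(1) of the paper, for the threshold functions `g i` at a fixed reserve: each is
non-increasing in the scores of the competitors, and the sum over any set of sellers is
non-decreasing in the score of each of its members. -/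
structure CompetitiveThresholds {ι α β : Type*} [DecidableEq ι] [Preorder α] [AddCommMonoid β]
    [Preorder β] (g : ι → (ι → α) → β) : Prop where
  antitone_update : ∀ i j, j ≠ i → ∀ r, Antitone fun x => g i (Function.update r j x)
  monotone_sum_update : ∀ (I : Finset ι) (i), i ∈ I → ∀ r,
    Monotone fun x => ∑ j ∈ I, g j (Function.update r i x)

namespace CompetitiveThresholds

theorem sum_le_sum {ι α β : Type*} [DecidableEq ι] [Finite ι] [Preorder α] [AddCommMonoid β]
    [Preorder β] [AddLeftMono β] {g : ι → (ι → α) → β} (hg : CompetitiveThresholds g)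
    {A : Finset ι} {r r' : ι → α} (hA : ∀ j ∈ A, r j ≤ r' j) (hAc : ∀ j ∉ A, r' j ≤ r j) :
    ∑ i ∈ A, g i r ≤ ∑ i ∈ A, g i r' := by
  cases nonempty_fintype ι
  suffices h : ∀ B : Finset ι, ∑ i ∈ A, g i r ≤ ∑ i ∈ A, g i (B.piecewise r' r) by
    simpa only [Finset.piecewise_univ] using h Finset.univ
  intro B
  induction B using Finset.induction_on with
  | empty => simp only [Finset.piecewise_empty, le_refl]
  | insert j B hj ih =>
    have hupdate : Function.update (B.piecewise r' r) j (r j) = B.piecewise r' r := by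
      rw [Function.update_eq_self_iff, Finset.piecewise_eq_of_notMem _ _ _ hj]
    refine ih.trans ?_
    rw [Finset.piecewise_insert]
    nth_rewrite 1 [← hupdate]
    by_cases hjA : j ∈ A
    · exact hg.monotone_sum_update A j hjA _ (hA j hjA)
    · exact Finset.sum_le_sum fun i hi =>
        hg.antitone_update i j (ne_of_mem_of_not_mem hi hjA).symm _ (hAc j hjA)

theorem exists_le {ι α β : Type*} [DecidableEq ι] [Finite ι] [Preorder α] [AddCommMonoid β]
    [LinearOrder β] [IsOrderedCancelAddMonoid β] {g : ι → (ι → α) → β}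
    (hg : CompetitiveThresholds g) {A : Finset ι} (hne : A.Nonempty) {r r' : ι → α}
    (hA : ∀ j ∈ A, r j ≤ r' j) (hAc : ∀ j ∉ A, r' j ≤ r j) : ∃ i ∈ A, g i r ≤ g i r' :=
  Finset.exists_le_of_sum_le hne (hg.sum_le_sum hA hAc)

end CompetitiveThresholds

/-- A solution on `[0, H]` of the feedback dynamics with threshold functions `f`, pacing function
`Ψ`, reserve `R`, estimated scores `ehat` and true metrics `e`. The fields `state`, `score`,
`threshold`, `selected` and `outcome` are the paper's `S`, `r`, `f_i(t)`, `I` and `O`; their values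
outside `[0, H]` are arbitrary. -/
structure PacedDynamics {ι : Type*} (H : ℝ) (f : ι → (ι → ℝ) → ℝ → ℝ) (Ψ : ℝ → ℝ → ℝ)
    (R : ℝ → ℝ) (ehat e : ι → ℝ → ℝ) where
  state : ι → ℝ → ℝ
  score : ι → ℝ → ℝ
  threshold : ι → ℝ → ℝ
  selected : ι → ℝ → ℝ
  outcome : ι → ℝ → ℝ
  score_eq : ∀ i, ∀ t ∈ Icc 0 H, score i t = Ψ (state i t) (ehat i t)
  threshold_eq : ∀ i, ∀ t ∈ Icc 0 H, threshold i t = f i (fun j => score j t) (R t)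
  selected_eq : ∀ i, ∀ t ∈ Icc 0 H, selected i t = if 0 ≤ threshold i t then 1 else 0
  outcome_eq : ∀ i, ∀ t ∈ Icc 0 H, outcome i t = selected i t * e i t
  outcome_integrable : ∀ i, IntervalIntegrable (outcome i) volume 0 H
  state_eq : ∀ i, ∀ t ∈ Icc 0 H, state i t = state i 0 + ∫ s in (0 : ℝ)..t, outcome i s

namespace PacedDynamics

variable {ι : Type*} {H : ℝ} {f : ι → (ι → ℝ) → ℝ → ℝ} {Ψ : ℝ → ℝ → ℝ} {R : ℝ → ℝ}
  {ehat e e' : ι → ℝ → ℝ}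

section Regularity

variable (E : PacedDynamics H f Ψ R ehat e)

theorem outcome_intervalIntegrable (i : ι) {x u : ℝ} (hx : x ∈ Icc 0 H) (hu : u ∈ Icc 0 H) :
    IntervalIntegrable (E.outcome i) volume x u :=
  (E.outcome_integrable i).mono_set (uIcc_subset_uIcc (Icc_subset_uIcc hx) (Icc_subset_uIcc hu))

theorem state_eq_add_integral (i : ι) {x u : ℝ} (hx : x ∈ Icc 0 H) (hu : u ∈ Icc 0 H) :
    E.state i u = E.state i x + ∫ s in x..u, E.outcome i s := by
  have h0 : (0 : ℝ) ∈ Icc 0 H := ⟨le_rfl, hx.1.trans hx.2⟩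
  rw [E.state_eq i u hu, E.state_eq i x hx, add_assoc,
    intervalIntegral.integral_add_adjacent_intervals
      (E.outcome_intervalIntegrable i h0 hx) (E.outcome_intervalIntegrable i hx hu)]

theorem continuousOn_state (i : ι) : ContinuousOn (E.state i) (Icc 0 H) :=
  (continuousOn_const.add ((intervalIntegral.continuousOn_primitive_interval'
    (E.outcome_integrable i) left_mem_uIcc).mono Icc_subset_uIcc)).congr (E.state_eq i)

theorem continuousOn_score (hΨ : Continuous Ψ.uncurry)
    (hehat : ∀ i, ContinuousOn (ehat i) (Icc 0 H)) (i : ι) :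
    ContinuousOn (E.score i) (Icc 0 H) :=
  (hΨ.comp_continuousOn ((E.continuousOn_state i).prodMk (hehat i))).congr (E.score_eq i)

theorem continuousOn_threshold (hf : ∀ i, Continuous (f i).uncurry) (hΨ : Continuous Ψ.uncurry)
    (hR : ContinuousOn R (Icc 0 H)) (hehat : ∀ i, ContinuousOn (ehat i) (Icc 0 H)) (i : ι) :
    ContinuousOn (E.threshold i) (Icc 0 H) :=
  ((hf i).comp_continuousOn
    ((continuousOn_pi.2 (E.continuousOn_score hΨ hehat)).prodMk hR)).congr (E.threshold_eq i)

end Regularity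

section Comparison

variable {E : PacedDynamics H f Ψ R ehat e} {G : PacedDynamics H f Ψ R ehat e'}

theorem outcome_le_outcome {i : ι} {t : ℝ} (ht : t ∈ Icc 0 H) (he' : 0 ≤ e' i t)
    (hee' : e i t ≤ e' i t) (hsel : 0 ≤ E.threshold i t → 0 ≤ G.threshold i t) :
    E.outcome i t ≤ G.outcome i t := by
  rw [E.outcome_eq i t ht, G.outcome_eq i t ht, E.selected_eq i t ht, G.selected_eq i t ht]
  by_cases hE : 0 ≤ E.threshold i t
  · simpa only [if_pos hE, if_pos (hsel hE), one_mul] using hee'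
  · rw [if_neg hE, zero_mul]
    split_ifs
    · simpa only [one_mul] using he'
    · rw [zero_mul]

theorem state_le_of_outcome_le {i : ι} {x u : ℝ} (hx : x ∈ Icc 0 H) (hu : u ∈ Icc 0 H)
    (hxu : x ≤ u) (hstate : E.state i x ≤ G.state i x)
    (houtcome : ∀ t ∈ Ioo x u, E.outcome i t ≤ G.outcome i t) : E.state i u ≤ G.state i u := by
  rw [E.state_eq_add_integral i hx hu, G.state_eq_add_integral i hx hu]
  exact add_le_add hstate (intervalIntegral.integral_mono_on_of_le_Ioo hxu
    (E.outcome_intervalIntegrable i hx hu) (G.outcome_intervalIntegrable i hx hu) houtcome)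

theorem state_le_of_threshold_ne_zero {i : ι} (he' : ∀ t ∈ Icc 0 H, 0 ≤ e' i t)
    (hee' : ∀ t ∈ Icc 0 H, e i t ≤ e' i t)
    (hEcont : ContinuousOn (E.threshold i) (Icc 0 H))
    (hGcont : ContinuousOn (G.threshold i) (Icc 0 H))
    {x u : ℝ} (hx : x ∈ Icc 0 H) (hu : u ∈ Icc 0 H) (hxu : x < u)
    (hE : ∀ t ∈ Ioc x u, E.threshold i t ≠ 0) (hG : ∀ t ∈ Ioc x u, G.threshold i t ≠ 0)
    (hstate : E.state i x ≤ G.state i x)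
    (hthreshold : E.threshold i u ≤ G.threshold i u) : E.state i u ≤ G.state i u := by
  have hsub : Ioc x u ⊆ Icc 0 H := fun t ht => ⟨hx.1.trans ht.1.le, ht.2.trans hu.2⟩
  have huu : u ∈ Ioc x u := right_mem_Ioc.2 hxu
  refine state_le_of_outcome_le hx hu hxu.le hstate fun t ht => ?_
  have htu : t ∈ Ioc x u := Ioo_subset_Ioc_self ht
  refine outcome_le_outcome (hsub htu) (he' t (hsub htu)) (hee' t (hsub htu)) fun hEt => ?_
  have hEu : 0 ≤ E.threshold i u :=
    le_of_isPreconnected_of_forall_ne isPreconnected_Ioc (hEcont.mono hsub) hE htu huu hEt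
  exact le_of_isPreconnected_of_forall_ne isPreconnected_Ioc (hGcont.mono hsub) hG huu htu
    (hEu.trans hthreshold)

theorem score_le_score (hΨ : ∀ a, Antitone fun s => Ψ s a) {i : ι} {t : ℝ} (ht : t ∈ Icc 0 H)
    (hstate : E.state i t ≤ G.state i t) : G.score i t ≤ E.score i t := by
  rw [E.score_eq i t ht, G.score_eq i t ht]
  exact hΨ _ hstate

variable [Finite ι] [DecidableEq ι]

theorem exists_threshold_le_of_state_lt (hf : ∀ R₀, CompetitiveThresholds fun i r => f i r R₀)
    (hΨ : ∀ a, Antitone fun s => Ψ s a) {t : ℝ} (ht : t ∈ Icc 0 H)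
    (hlt : ∃ i, G.state i t < E.state i t) :
    ∃ i, G.state i t < E.state i t ∧ E.threshold i t ≤ G.threshold i t := by
  obtain ⟨A, hA⟩ : ∃ A : Finset ι, ∀ j, j ∈ A ↔ G.state j t < E.state j t :=
    ⟨(toFinite {j | G.state j t < E.state j t}).toFinset, fun j => Finite.mem_toFinset _⟩
  obtain ⟨i, hi, hle⟩ := (hf (R t)).exists_le (r := (E.score · t)) (r' := (G.score · t))
    (hlt.imp fun i => (hA i).2) (fun j hj => score_le_score hΨ ht ((hA j).1 hj).le)
    (fun j hj => score_le_score hΨ ht (not_lt.1 (mt (hA j).2 hj)))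
  refine ⟨i, (hA i).1 hi, ?_⟩
  rwa [E.threshold_eq i t ht, G.threshold_eq i t ht]

theorem eventually_state_le (hf : ∀ R₀, CompetitiveThresholds fun i r => f i r R₀)
    (hΨ : ∀ a, Antitone fun s => Ψ s a) (he' : ∀ i, ∀ t ∈ Icc 0 H, 0 ≤ e' i t)
    (hee' : ∀ i, ∀ t ∈ Icc 0 H, e i t ≤ e' i t)
    (hEcont : ∀ i, ContinuousOn (E.threshold i) (Icc 0 H))
    (hGcont : ∀ i, ContinuousOn (G.threshold i) (Icc 0 H))
    (hfin : {t | t ∈ Icc 0 H ∧ ∃ i, E.threshold i t = 0 ∨ G.threshold i t = 0}.Finite)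
    {x : ℝ} (hx : x ∈ Ico 0 H) (hstate : ∀ i, E.state i x ≤ G.state i x) :
    ∀ᶠ u in 𝓝[>] x, ∀ i, E.state i u ≤ G.state i u := by
  filter_upwards [eventually_disjoint_Ioc_of_finite hfin x, Ioo_mem_nhdsGT hx.2]
    with u hdisj ⟨hxu, huH⟩
  have hxI : x ∈ Icc 0 H := Ico_subset_Icc_self hx
  have huI : u ∈ Icc 0 H := ⟨hx.1.trans hxu.le, huH.le⟩
  have hne : ∀ i, ∀ t ∈ Ioc x u, ¬(E.threshold i t = 0 ∨ G.threshold i t = 0) :=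
    fun i t ht hzero => disjoint_left.1 hdisj ht
      ⟨⟨hx.1.trans ht.1.le, ht.2.trans huH.le⟩, i, hzero⟩
  by_contra! hlt
  obtain ⟨i, hi, hthreshold⟩ := exists_threshold_le_of_state_lt hf hΨ huI hlt
  exact hi.not_ge <| state_le_of_threshold_ne_zero (he' i) (hee' i) (hEcont i) (hGcont i)
    hxI huI hxu (fun t ht h => hne i t ht (.inl h)) (fun t ht h => hne i t ht (.inr h))
    (hstate i) hthreshold

theorem state_le_state (hf : ∀ R₀, CompetitiveThresholds fun i r => f i r R₀)
    (hΨ : ∀ a, Antitone fun s => Ψ s a) (he' : ∀ i, ∀ t ∈ Icc 0 H, 0 ≤ e' i t)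
    (hee' : ∀ i, ∀ t ∈ Icc 0 H, e i t ≤ e' i t)
    (hEcont : ∀ i, ContinuousOn (E.threshold i) (Icc 0 H))
    (hGcont : ∀ i, ContinuousOn (G.threshold i) (Icc 0 H))
    (hfin : {t | t ∈ Icc 0 H ∧ ∃ i, E.threshold i t = 0 ∨ G.threshold i t = 0}.Finite)
    (hinit : ∀ i, E.state i 0 ≤ G.state i 0) {t : ℝ} (ht : t ∈ Icc 0 H) (i : ι) :
    E.state i t ≤ G.state i t := by
  have hclosed : IsClosed ({t | ∀ i, E.state i t ≤ G.state i t} ∩ Icc 0 H) := by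
    rw [inter_comm]
    exact isClosed_Icc.isClosed_le (continuousOn_pi.2 E.continuousOn_state)
      (continuousOn_pi.2 G.continuousOn_state)
  exact hclosed.Icc_subset_of_forall_mem_nhdsWithin hinit
    (fun x hx => eventually_state_le hf hΨ he' hee' hEcont hGcont hfin hx.2 hx.1) ht i

end Comparison

end PacedDynamics

theorem stmt6_general {ι : Type*} [Finite ι] [DecidableEq ι] {H : ℝ}
    {f : ι → (ι → ℝ) → ℝ → ℝ} {Ψ : ℝ → ℝ → ℝ} {R : ℝ → ℝ} {ehat e e' : ι → ℝ → ℝ}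
    (hf : ∀ R₀, CompetitiveThresholds fun i r => f i r R₀) (hΨ : ∀ a, Antitone fun s => Ψ s a)
    (he' : ∀ i, ∀ t ∈ Icc 0 H, 0 ≤ e' i t) (hee' : ∀ i, ∀ t ∈ Icc 0 H, e i t ≤ e' i t)
    (hfcont : ∀ i, Continuous (f i).uncurry) (hΨcont : Continuous Ψ.uncurry)
    (hRcont : ContinuousOn R (Icc 0 H)) (hehat : ∀ i, ContinuousOn (ehat i) (Icc 0 H))
    (E : PacedDynamics H f Ψ R ehat e) (G : PacedDynamics H f Ψ R ehat e')
    (hfin : {t | t ∈ Icc 0 H ∧ ∃ i, E.threshold i t = 0 ∨ G.threshold i t = 0}.Finite)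
    (hinit : ∀ i, E.state i 0 = G.state i 0) (i : ι) {t : ℝ} (ht : t ∈ Icc 0 H) :
    ∫ s in (0 : ℝ)..t, E.outcome i s ≤ ∫ s in (0 : ℝ)..t, G.outcome i s := by
  have hle : E.state i t ≤ G.state i t := PacedDynamics.state_le_state hf hΨ he' hee'
    (E.continuousOn_threshold hfcont hΨcont hRcont hehat)
    (G.continuousOn_threshold hfcont hΨcont hRcont hehat) hfin (fun j => (hinit j).le) ht i
  rwa [E.state_eq i t ht, G.state_eq i t ht, hinit i, add_le_add_iff_left] at hle

/-- key pathwise claim in the proof of Theorem 1: naive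
seller-side experiment with feedback loops under a fixed partition `𝒯 = T`,
`𝒞 = Tᶜ`, with `ê_i^C = ê_i^T`, common pacing function `Ψ`, Assumptions 1–3,
and solutions of the experiment / global-treatment / global-control dynamics
with common initial states. Then the cumulative experimental outcome of each
seller is bounded above by its global-treatment counterpart. -/
theorem stmt6 (N : ℕ) (H : ℝ) (hH : 0 < H)
    (eT eC ehT ehC : Fin N → ℝ → ℝ) (R : ℝ → ℝ)
    (f : Fin N → (Fin N → ℝ) → ℝ → ℝ) (Ψ : ℝ → ℝ → ℝ)
    (T : Finset (Fin N))
    (heq : ∀ (i : Fin N) (t : ℝ), t ∈ Set.Icc (0 : ℝ) H → ehC i t = ehT i t)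
    -- Assumption 1.(1): f_i non-increasing in r_j (j ≠ i), and the sum over any
    -- index set containing i is non-decreasing in r_i
    (hf_anti : ∀ (i j : Fin N), j ≠ i → ∀ (r : Fin N → ℝ) (R₀ x y : ℝ), x ≤ y →
      f i (Function.update r j y) R₀ ≤ f i (Function.update r j x) R₀)
    (hf_sum_mono : ∀ (I : Finset (Fin N)) (i : Fin N), i ∈ I →
      ∀ (r : Fin N → ℝ) (R₀ x y : ℝ), x ≤ y →
      ∑ j ∈ I, f j (Function.update r i x) R₀ ≤ ∑ j ∈ I, f j (Function.update r i y) R₀)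
    -- Assumption 1.(2): Ψ non-increasing in the state
    (hΨ_anti : ∀ e : ℝ, ∀ s s' : ℝ, s ≤ s' → Ψ s' e ≤ Ψ s e)
    -- Assumption 1.(4): Ψ non-decreasing in the estimated score
    (hΨ_mono : ∀ s : ℝ, ∀ e e' : ℝ, e ≤ e' → Ψ s e ≤ Ψ s e')
    -- Assumption 2: nonnegative outcomes, uniform treatment effect
    (he_nonneg : ∀ (i : Fin N) (t : ℝ), t ∈ Set.Icc (0 : ℝ) H → 0 ≤ eC i t)
    (he_mono : ∀ (i : Fin N) (t : ℝ), t ∈ Set.Icc (0 : ℝ) H → eC i t ≤ eT i t)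
    -- processes
    (SE rE fNE IE OE : Fin N → ℝ → ℝ)
    (SGT rGT fGT IGT OGT : Fin N → ℝ → ℝ)
    (SGC rGC fGC IGC OGC : Fin N → ℝ → ℝ)
    -- Assumption 3: continuity and finitely many zero-crossing times
    (hcont_e : ∀ i : Fin N, ContinuousOn (eT i) (Set.Icc 0 H) ∧
      ContinuousOn (eC i) (Set.Icc 0 H) ∧ ContinuousOn (ehT i) (Set.Icc 0 H) ∧
      ContinuousOn (ehC i) (Set.Icc 0 H))
    (hcont_R : Continuous R)
    (hcont_f : ∀ i : Fin N, Continuous (fun x : (Fin N → ℝ) × ℝ => f i x.1 x.2))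
    (hcont_Ψ : Continuous (fun x : ℝ × ℝ => Ψ x.1 x.2))
    (hfin : Set.Finite {t : ℝ | t ∈ Set.Icc (0 : ℝ) H ∧
      ∃ i : Fin N, fNE i t = 0 ∨ fGT i t = 0 ∨ fGC i t = 0})
    -- common initial states
    (hS0 : ∀ i : Fin N, SE i 0 = SGT i 0 ∧ SE i 0 = SGC i 0)
    -- naive experiment dynamics
    (hrE : ∀ (i : Fin N) (t : ℝ), t ∈ Set.Icc (0 : ℝ) H →
      rE i t = Ψ (SE i t) (if i ∈ T then ehT i t else ehC i t))
    (hfNE : ∀ (i : Fin N) (t : ℝ), t ∈ Set.Icc (0 : ℝ) H →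
      fNE i t = f i (fun j => rE j t) (R t))
    (hIE : ∀ (i : Fin N) (t : ℝ), t ∈ Set.Icc (0 : ℝ) H →
      IE i t = if 0 ≤ fNE i t then 1 else 0)
    (hOE : ∀ (i : Fin N) (t : ℝ), t ∈ Set.Icc (0 : ℝ) H →
      OE i t = IE i t * (if i ∈ T then eT i t else eC i t))
    (hOE_int : ∀ i : Fin N, IntervalIntegrable (OE i) MeasureTheory.volume 0 H)
    (hSE : ∀ (i : Fin N) (t : ℝ), t ∈ Set.Icc (0 : ℝ) H →
      SE i t = SE i 0 + ∫ s in (0:ℝ)..t, OE i s)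
    -- global treatment dynamics
    (hrGT : ∀ (i : Fin N) (t : ℝ), t ∈ Set.Icc (0 : ℝ) H →
      rGT i t = Ψ (SGT i t) (ehT i t))
    (hfGT : ∀ (i : Fin N) (t : ℝ), t ∈ Set.Icc (0 : ℝ) H →
      fGT i t = f i (fun j => rGT j t) (R t))
    (hIGT : ∀ (i : Fin N) (t : ℝ), t ∈ Set.Icc (0 : ℝ) H →
      IGT i t = if 0 ≤ fGT i t then 1 else 0)
    (hOGT : ∀ (i : Fin N) (t : ℝ), t ∈ Set.Icc (0 : ℝ) H →
      OGT i t = IGT i t * eT i t)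
    (hOGT_int : ∀ i : Fin N, IntervalIntegrable (OGT i) MeasureTheory.volume 0 H)
    (hSGT : ∀ (i : Fin N) (t : ℝ), t ∈ Set.Icc (0 : ℝ) H →
      SGT i t = SGT i 0 + ∫ s in (0:ℝ)..t, OGT i s)
    -- global control dynamics
    (hrGC : ∀ (i : Fin N) (t : ℝ), t ∈ Set.Icc (0 : ℝ) H →
      rGC i t = Ψ (SGC i t) (ehC i t))
    (hfGC : ∀ (i : Fin N) (t : ℝ), t ∈ Set.Icc (0 : ℝ) H →
      fGC i t = f i (fun j => rGC j t) (R t))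
    (hIGC : ∀ (i : Fin N) (t : ℝ), t ∈ Set.Icc (0 : ℝ) H →
      IGC i t = if 0 ≤ fGC i t then 1 else 0)
    (hOGC : ∀ (i : Fin N) (t : ℝ), t ∈ Set.Icc (0 : ℝ) H →
      OGC i t = IGC i t * eC i t)
    (hOGC_int : ∀ i : Fin N, IntervalIntegrable (OGC i) MeasureTheory.volume 0 H)
    (hSGC : ∀ (i : Fin N) (t : ℝ), t ∈ Set.Icc (0 : ℝ) H →
      SGC i t = SGC i 0 + ∫ s in (0:ℝ)..t, OGC i s) :
    ∀ (i : Fin N) (t : ℝ), t ∈ Set.Icc (0 : ℝ) H →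
      ∫ s in (0:ℝ)..t, OE i s ≤ ∫ s in (0:ℝ)..t, OGT i s := by
  intro i t ht
  exact stmt6_general
    (fun R₀ => ⟨fun i j hj r x y => hf_anti i j hj r R₀ x y,
      fun I i hi r x y => hf_sum_mono I i hi r R₀ x y⟩)
    (fun a s s' => hΨ_anti a s s')
    (fun j s hs => (he_nonneg j s hs).trans (he_mono j s hs))
    (fun j s hs => by split_ifs; exacts [le_rfl, he_mono j s hs])
    hcont_f hcont_Ψ hcont_R.continuousOn (fun j => (hcont_e j).2.2.1)
    ⟨SE, rE, fNE, IE, OE, fun j s hs => by rw [hrE j s hs, heq j s hs, ite_self],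
      hfNE, hIE, hOE, hOE_int, hSE⟩
    ⟨SGT, rGT, fGT, IGT, OGT, hrGT, hfGT, hIGT, hOGT, hOGT_int, hSGT⟩
    (hfin.subset fun s ⟨hs, j, hj⟩ => ⟨hs, j, hj.imp_right .inl⟩)
    (fun j => (hS0 j).1) i ht
end

section
/- Consider the naive seller-side experiment with feedback loops under a fixed partition {1,…,N} = 𝒯 ⊔ 𝒞, with ê_i^C(t) = ê_i^T(t) for all i and t, with a common pacing function Ψ^T = Ψ^C = Ψ, and under Assumptions 1–3 (monotonicity of f_i and Ψ, nonnegative outcomes, uniform treatment effect e_i^T(t) ≥ e_i^C(t) ≥ 0, continuity, and finitely many zero-crossing times of the threshold functions). Suppose the experiment dynamics, the global treatment dynamics, and the global control dynamics each admit solutions with common initial states S_i^{E}(0) = S_i^{GT}(0) = S_i^{GC}(0). Then for every seller i = 1,…,N and every t ∈ [0,H], ∫₀^t O_i^{E}(s) ds ≥ ∫₀^t O_i^{GC}(s) ds. -/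
/-!
Let `S` and `S'` be the states of two solutions, the second with the larger outcome rates, and let
`B` be the set of sellers with `S' i < S i` at a given time. Passing from the first solution to the
second, pacing does not lower the bids in `B` and does not raise the others, so `∑ i ∈ B, f i` does
not decrease and, if `B` is nonempty, neither does the threshold of some `j ∈ B`. Shortly after a
time at which `S ≤ S'` every auction indicator is constant, so this `j` has had at least as large an
outcome in the second solution ever since and cannot have fallen behind. Hence `B = ∅`, and `S ≤ S'`
propagates by continuous induction.
-/

open Set Filter Function Topology MeasureTheory

section Competitive

variable {ι α β M : Type*} [DecidableEq ι]

lemma le_of_forall_update_le_update [Finite ι] [Preorder M] {g : (ι → α) → M} {r r' : ι → α}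
    (h : ∀ i s, g (update s i (r i)) ≤ g (update s i (r' i))) : g r ≤ g r' := by
  have := Fintype.ofFinite ι
  suffices key : ∀ A : Finset ι, g r ≤ g (A.piecewise r' r) by simpa using key Finset.univ
  intro A
  induction A using Finset.induction_on with
  | empty => simp
  | insert k A hk ih =>
    have hself : update (A.piecewise r' r) k (r k) = A.piecewise r' r := by
      simp [update_eq_self_iff, hk]
    calc g r ≤ g (update (A.piecewise r' r) k (r k)) := by rwa [hself]
      _ ≤ g (update (A.piecewise r' r) k (r' k)) := h k _
      _ = g ((insert k A).piecewise r' r) := by rw [Finset.piecewise_insert]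

/-- Competitive threshold functions (Assumption 1 (1), at a fixed reserve): raising one seller's bid
lowers the thresholds of all the others, but raises the total threshold of any group of sellers
containing that seller. -/
structure IsCompetitive [Preorder α] [AddCommMonoid M] [Preorder M] (f : ι → (ι → α) → M) :
    Prop where
  antitone_of_ne : ∀ i j, j ≠ i → ∀ r, Antitone fun x => f i (update r j x)
  monotone_sum : ∀ (B : Finset ι) (i : ι), i ∈ B → ∀ r,
    Monotone fun x => ∑ j ∈ B, f j (update r i x)

namespace IsCompetitive

lemma sum_le_sum [Finite ι] [Preorder α] [AddCommMonoid M] [Preorder M] [AddLeftMono M]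
    {f : ι → (ι → α) → M} (hf : IsCompetitive f) {B : Finset ι} {r r' : ι → α}
    (hB : ∀ i ∈ B, r i ≤ r' i) (hBc : ∀ i ∉ B, r' i ≤ r i) :
    ∑ j ∈ B, f j r ≤ ∑ j ∈ B, f j r' := by
  refine le_of_forall_update_le_update (g := fun r => ∑ j ∈ B, f j r) fun i s => ?_
  by_cases hi : i ∈ B
  · exact hf.monotone_sum B i hi s (hB i hi)
  · exact Finset.sum_le_sum fun j hj =>
      hf.antitone_of_ne j i (fun hij => hi (hij ▸ hj)) s (hBc i hi)

lemma exists_lt_and_threshold_le [Finite ι] [Preorder α] [LinearOrder β] [AddCommMonoid M]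
    [LinearOrder M] [IsOrderedCancelAddMonoid M] {f : ι → (ι → α) → M} (hf : IsCompetitive f)
    {ψ : ι → β → α} (hψ : ∀ i, Antitone (ψ i)) {s s' : ι → β} (hss' : ¬ s ≤ s') :
    ∃ j, s' j < s j ∧ f j (fun i => ψ i (s i)) ≤ f j (fun i => ψ i (s' i)) := by
  have := Fintype.ofFinite ι
  let B : Finset ι := {i | s' i < s i}
  have mem_B {i : ι} : i ∈ B ↔ s' i < s i := by simp [B]
  have hB : B.Nonempty := by
    obtain ⟨i, hi⟩ := not_forall.1 hss'
    exact ⟨i, mem_B.2 (not_le.1 hi)⟩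
  have hsum : ∑ j ∈ B, f j (fun i => ψ i (s i)) ≤ ∑ j ∈ B, f j (fun i => ψ i (s' i)) :=
    hf.sum_le_sum (fun i hi => hψ i (mem_B.1 hi).le)
      fun i hi => hψ i (not_lt.1 (mt mem_B.2 hi))
  obtain ⟨j, hj, hle⟩ := Finset.exists_le_of_sum_le hB hsum
  exact ⟨j, mem_B.1 hj, hle⟩

end IsCompetitive

end Competitive

lemma eventuallyConst_le_nhdsGT {X Y : Type*} [ConditionallyCompleteLinearOrder X]
    [TopologicalSpace X] [OrderTopology X] [DenselyOrdered X] [LinearOrder Y] [TopologicalSpace Y]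
    [OrderClosedTopology Y] {g : X → Y} {a b x : X} {c : Y} (hg : ContinuousOn g (Icc a b))
    (hZ : {t ∈ Icc a b | g t = c}.Finite) (hx : x ∈ Ico a b) :
    EventuallyConst (fun t => c ≤ g t) (𝓝[>] x) := by
  have hZ_compl : {t ∈ Icc a b | g t = c}ᶜ ∈ 𝓝[>] x :=
    nhdsGT_le_nhdsNE x (nhdsNE_le_cofinite x hZ.compl_mem_cofinite)
  obtain ⟨z, ⟨hxz, hzb⟩, hz⟩ := (mem_nhdsGT_iff_exists_mem_Ioc_Ioo_subset hx.2).1 hZ_compl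
  have hsub : Ioo x z ⊆ Icc a b := fun t ht => ⟨hx.1.trans ht.1.le, ht.2.le.trans hzb⟩
  have hmem : Ioo x z ∈ 𝓝[>] x := Ioo_mem_nhdsGT hxz
  rw [eventuallyConst_pred]
  by_cases hlt : ∃ s ∈ Ioo x z, g s < c
  · obtain ⟨s, hs, hgs⟩ := hlt
    refine .inr (mem_of_superset hmem fun t ht hgt => ?_)
    obtain ⟨u, hu, hgu⟩ :=
      isPreconnected_Ioo.intermediate_value hs ht (hg.mono hsub) ⟨hgs.le, hgt⟩
    exact hz hu ⟨hsub hu, hgu⟩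
  · push Not at hlt
    exact .inl (mem_of_superset hmem hlt)

/-- A solution on `[0, H]` of the pacing dynamics with estimated scores `score` and true outcome
rates `e`: states `S`, bids `r`, threshold values `F`, auction indicators `I` and outcomes `O`. The
processes are unconstrained outside `[0, H]`. The field `intervalIntegrable` keeps
the integral in `state_eq` from being the junk value `0`. -/
structure IsPacingSolution {ι : Type*} (f : ι → (ι → ℝ) → ℝ → ℝ) (Ψ : ℝ → ℝ → ℝ) (R : ℝ → ℝ)
    (score e : ι → ℝ → ℝ) (H : ℝ) (S r F I O : ι → ℝ → ℝ) : Prop where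
  bid_eq : ∀ i, ∀ t ∈ Icc 0 H, r i t = Ψ (S i t) (score i t)
  threshold_eq : ∀ i, ∀ t ∈ Icc 0 H, F i t = f i (fun j => r j t) (R t)
  indicator_eq : ∀ i, ∀ t ∈ Icc 0 H, I i t = if 0 ≤ F i t then 1 else 0
  outcome_eq : ∀ i, ∀ t ∈ Icc 0 H, O i t = I i t * e i t
  intervalIntegrable : ∀ i, IntervalIntegrable (O i) volume 0 H
  state_eq : ∀ i, ∀ t ∈ Icc 0 H, S i t = S i 0 + ∫ s in (0 : ℝ)..t, O i s

namespace IsPacingSolution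

variable {ι : Type*} {f : ι → (ι → ℝ) → ℝ → ℝ} {Ψ : ℝ → ℝ → ℝ} {R : ℝ → ℝ} {H : ℝ}
  {score e e' S r F I O S' r' F' I' O' : ι → ℝ → ℝ}

lemma intervalIntegrable_of_mem (h : IsPacingSolution f Ψ R score e H S r F I O) (i : ι) {x t : ℝ}
    (hx : x ∈ Icc 0 H) (ht : t ∈ Icc 0 H) : IntervalIntegrable (O i) volume x t :=
  (h.intervalIntegrable i).mono_set (uIcc_subset_uIcc (Icc_subset_uIcc hx) (Icc_subset_uIcc ht))

lemma state_sub_state (h : IsPacingSolution f Ψ R score e H S r F I O) (i : ι) {x t : ℝ}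
    (hx : x ∈ Icc 0 H) (ht : t ∈ Icc 0 H) : S i t - S i x = ∫ s in x..t, O i s := by
  have h0 : (0 : ℝ) ∈ Icc 0 H := ⟨le_rfl, hx.1.trans hx.2⟩
  rw [h.state_eq i t ht, h.state_eq i x hx, add_sub_add_left_eq_sub,
    intervalIntegral.integral_interval_sub_left (h.intervalIntegrable_of_mem i h0 ht)
      (h.intervalIntegrable_of_mem i h0 hx)]

lemma continuousOn_state (h : IsPacingSolution f Ψ R score e H S r F I O) (i : ι) :
    ContinuousOn (S i) (Icc 0 H) := by
  have hprim : ContinuousOn (fun t => ∫ s in (0 : ℝ)..t, O i s) (Icc 0 H) :=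
    (intervalIntegral.continuousOn_primitive_interval' (h.intervalIntegrable i) left_mem_uIcc).mono
      Icc_subset_uIcc
  exact (continuousOn_const.add hprim).congr (h.state_eq i)

lemma continuousOn_threshold (h : IsPacingSolution f Ψ R score e H S r F I O)
    (hf : ∀ i, Continuous fun p : (ι → ℝ) × ℝ => f i p.1 p.2)
    (hΨ : Continuous fun p : ℝ × ℝ => Ψ p.1 p.2) (hR : ContinuousOn R (Icc 0 H))
    (hscore : ∀ i, ContinuousOn (score i) (Icc 0 H)) (i : ι) : ContinuousOn (F i) (Icc 0 H) := by
  have hbid (j : ι) : ContinuousOn (r j) (Icc 0 H) :=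
    (hΨ.comp_continuousOn ((h.continuousOn_state j).prodMk (hscore j))).congr (h.bid_eq j)
  exact ((hf i).comp_continuousOn ((continuousOn_pi.2 hbid).prodMk hR)).congr (h.threshold_eq i)

lemma eventuallyConst_indicator (h : IsPacingSolution f Ψ R score e H S r F I O)
    (hf : ∀ i, Continuous fun p : (ι → ℝ) × ℝ => f i p.1 p.2)
    (hΨ : Continuous fun p : ℝ × ℝ => Ψ p.1 p.2) (hR : ContinuousOn R (Icc 0 H))
    (hscore : ∀ i, ContinuousOn (score i) (Icc 0 H)) {i : ι}
    (hZ : {t ∈ Icc 0 H | F i t = 0}.Finite) {x : ℝ} (hx : x ∈ Ico 0 H) :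
    EventuallyConst (I i) (𝓝[>] x) := by
  classical
  have hF : ContinuousOn (F i) (Icc 0 H) := h.continuousOn_threshold hf hΨ hR hscore i
  have hsign := (eventuallyConst_le_nhdsGT hF hZ hx).comp fun p => if p then (1 : ℝ) else 0
  refine hsign.congr ?_
  filter_upwards [Ioo_mem_nhdsGT hx.2] with t ht
  rw [h.indicator_eq i t ⟨hx.1.trans ht.1.le, ht.2.le⟩]
  simp only [comp_apply]

lemma indicator_nonneg (h : IsPacingSolution f Ψ R score e H S r F I O) (i : ι) {t : ℝ}
    (ht : t ∈ Icc 0 H) : 0 ≤ I i t := by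
  rw [h.indicator_eq i t ht]
  split_ifs <;> simp

lemma indicator_le_indicator (h : IsPacingSolution f Ψ R score e H S r F I O)
    (h' : IsPacingSolution f Ψ R score e' H S' r' F' I' O') {i : ι} {t : ℝ} (ht : t ∈ Icc 0 H)
    (hF : F i t ≤ F' i t) : I i t ≤ I' i t := by
  by_cases hpos : 0 ≤ F i t
  · rw [h.indicator_eq i t ht, h'.indicator_eq i t ht, if_pos hpos, if_pos (hpos.trans hF)]
  · rw [h.indicator_eq i t ht, if_neg hpos]
    exact h'.indicator_nonneg i ht

lemma exists_state_lt_and_indicator_le [Finite ι] [DecidableEq ι]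
    (h : IsPacingSolution f Ψ R score e H S r F I O)
    (h' : IsPacingSolution f Ψ R score e' H S' r' F' I' O')
    (hf : ∀ R₀, IsCompetitive fun i b => f i b R₀) (hΨ : ∀ q, Antitone fun s => Ψ s q) {t : ℝ}
    (ht : t ∈ Icc 0 H) (hS : ¬ ∀ i, S i t ≤ S' i t) : ∃ j, S' j t < S j t ∧ I j t ≤ I' j t := by
  obtain ⟨j, hj, hle⟩ := (hf (R t)).exists_lt_and_threshold_le (fun i => hΨ (score i t)) hS
  refine ⟨j, hj, h.indicator_le_indicator h' ht ?_⟩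
  rw [h.threshold_eq j t ht, h'.threshold_eq j t ht]
  simpa only [h.bid_eq _ t ht, h'.bid_eq _ t ht] using hle

lemma state_le_state_of_indicator_le (h : IsPacingSolution f Ψ R score e H S r F I O)
    (h' : IsPacingSolution f Ψ R score e' H S' r' F' I' O')
    {i : ι} (he : ∀ t ∈ Icc 0 H, 0 ≤ e i t) (hee' : ∀ t ∈ Icc 0 H, e i t ≤ e' i t)
    {x t : ℝ} (hx : x ∈ Icc 0 H) (ht : t ∈ Icc 0 H) (hxt : x ≤ t) (hSx : S i x ≤ S' i x)
    (hI : ∀ s ∈ Ioo x t, I i s ≤ I' i s) : S i t ≤ S' i t := by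
  have hO (s : ℝ) (hs : s ∈ Ioo x t) : O i s ≤ O' i s := by
    have hsH : s ∈ Icc 0 H := ⟨hx.1.trans hs.1.le, hs.2.le.trans ht.2⟩
    rw [h.outcome_eq i s hsH, h'.outcome_eq i s hsH]
    exact mul_le_mul (hI s hs) (hee' s hsH) (he s hsH) (h'.indicator_nonneg i hsH)
  have hint : S i t - S i x ≤ S' i t - S' i x := by
    rw [h.state_sub_state i hx ht, h'.state_sub_state i hx ht]
    exact intervalIntegral.integral_mono_on_of_le_Ioo hxt (h.intervalIntegrable_of_mem i hx ht)
      (h'.intervalIntegrable_of_mem i hx ht) hO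
  linarith

lemma exists_mem_Ioc_state_le_state [Finite ι] [DecidableEq ι]
    (h : IsPacingSolution f Ψ R score e H S r F I O)
    (h' : IsPacingSolution f Ψ R score e' H S' r' F' I' O')
    (hf : ∀ R₀, IsCompetitive fun i b => f i b R₀) (hΨ : ∀ q, Antitone fun s => Ψ s q)
    (he : ∀ i, ∀ t ∈ Icc 0 H, 0 ≤ e i t) (hee' : ∀ i, ∀ t ∈ Icc 0 H, e i t ≤ e' i t)
    {x y : ℝ} (hx : x ∈ Ico 0 H) (hxy : x < y)
    (hI : ∀ i, EventuallyConst (I i) (𝓝[>] x)) (hI' : ∀ i, EventuallyConst (I' i) (𝓝[>] x))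
    (hSx : ∀ i, S i x ≤ S' i x) : ∃ t ∈ Ioc x y, ∀ i, S i t ≤ S' i t := by
  choose c hc using fun i => eventuallyConst_iff_exists_eventuallyEq.1 (hI i)
  choose c' hc' using fun i => eventuallyConst_iff_exists_eventuallyEq.1 (hI' i)
  have hconst : ∀ᶠ s in 𝓝[>] x, ∀ i, I i s = c i ∧ I' i s = c' i :=
    eventually_all.2 fun i => (hc i).and (hc' i)
  obtain ⟨z, ⟨hxz, hz⟩, hzI⟩ :=
    (mem_nhdsGT_iff_exists_mem_Ioc_Ioo_subset (lt_min hxy hx.2)).1 hconst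
  obtain ⟨t, hxt, htz⟩ := exists_between hxz
  have htmin : t ≤ min y H := htz.le.trans hz
  have ht : t ∈ Icc 0 H := ⟨hx.1.trans hxt.le, htmin.trans (min_le_right y H)⟩
  refine ⟨t, ⟨hxt, htmin.trans (min_le_left y H)⟩, ?_⟩
  by_contra hSt
  obtain ⟨j, hj, hIt⟩ := h.exists_state_lt_and_indicator_le h' hf hΨ ht hSt
  have hIxt (s : ℝ) (hs : s ∈ Ioo x t) : I j s ≤ I' j s := by
    obtain ⟨hIs, hIs'⟩ := hzI ⟨hs.1, hs.2.trans htz⟩ j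
    obtain ⟨hIt_eq, hIt_eq'⟩ := hzI ⟨hxt, htz⟩ j
    rwa [hIs, hIs', ← hIt_eq, ← hIt_eq']
  exact hj.not_ge <| h.state_le_state_of_indicator_le h' (he j) (hee' j) (Ico_subset_Icc_self hx)
    ht hxt.le (hSx j) hIxt

theorem state_le_state [Finite ι] [DecidableEq ι]
    (h : IsPacingSolution f Ψ R score e H S r F I O)
    (h' : IsPacingSolution f Ψ R score e' H S' r' F' I' O')
    (hf : ∀ R₀, IsCompetitive fun i b => f i b R₀) (hΨ : ∀ q, Antitone fun s => Ψ s q)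
    (he : ∀ i, ∀ t ∈ Icc 0 H, 0 ≤ e i t) (hee' : ∀ i, ∀ t ∈ Icc 0 H, e i t ≤ e' i t)
    (hI : ∀ i, ∀ x ∈ Ico 0 H, EventuallyConst (I i) (𝓝[>] x))
    (hI' : ∀ i, ∀ x ∈ Ico 0 H, EventuallyConst (I' i) (𝓝[>] x))
    (hS0 : ∀ i, S i 0 ≤ S' i 0) {t : ℝ} (ht : t ∈ Icc 0 H) (i : ι) : S i t ≤ S' i t := by
  have hclosed : IsClosed ({t | ∀ i, S i t ≤ S' i t} ∩ Icc 0 H) := by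
    rw [inter_comm]
    exact isClosed_Icc.isClosed_le (f := fun t i => S i t) (g := fun t i => S' i t)
      (continuousOn_pi.2 h.continuousOn_state) (continuousOn_pi.2 h'.continuousOn_state)
  refine hclosed.Icc_subset_of_forall_exists_gt hS0 (fun x hx y hxy => ?_) ht i
  obtain ⟨u, hu, hSu⟩ := h.exists_mem_Ioc_state_le_state h' hf hΨ he hee' hx.2 hxy
    (fun i => hI i x hx.2) (fun i => hI' i x hx.2) hx.1
  exact ⟨u, hSu, hu⟩

end IsPacingSolution

theorem stmt7_general {ι : Type*} [Finite ι] [DecidableEq ι] {H : ℝ}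
    {f : ι → (ι → ℝ) → ℝ → ℝ} {Ψ : ℝ → ℝ → ℝ} {R : ℝ → ℝ}
    {score e e' S r F I O S' r' F' I' O' : ι → ℝ → ℝ}
    (hf : ∀ R₀, IsCompetitive fun i b => f i b R₀) (hΨ : ∀ q, Antitone fun s => Ψ s q)
    (he : ∀ i, ∀ t ∈ Icc 0 H, 0 ≤ e i t) (hee' : ∀ i, ∀ t ∈ Icc 0 H, e i t ≤ e' i t)
    (h : IsPacingSolution f Ψ R score e H S r F I O)
    (h' : IsPacingSolution f Ψ R score e' H S' r' F' I' O')
    (hI : ∀ i, ∀ x ∈ Ico 0 H, EventuallyConst (I i) (𝓝[>] x))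
    (hI' : ∀ i, ∀ x ∈ Ico 0 H, EventuallyConst (I' i) (𝓝[>] x))
    (hS0 : ∀ i, S' i 0 = S i 0) (i : ι) (t : ℝ) (ht : t ∈ Icc 0 H) :
    ∫ s in (0 : ℝ)..t, O i s ≤ ∫ s in (0 : ℝ)..t, O' i s := by
  have hS : S i t ≤ S' i t := h.state_le_state h' hf hΨ he hee' hI hI' (fun i => (hS0 i).ge) ht i
  rw [h.state_eq i t ht, h'.state_eq i t ht, hS0 i] at hS
  exact le_of_add_le_add_left hS

/-- symmetric lower-bound pathwise claim in the proof of Theorem 1: naive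
seller-side experiment with feedback loops under a fixed partition `𝒯 = T`,
`𝒞 = Tᶜ`, with `ê_i^C = ê_i^T`, common pacing function `Ψ`, Assumptions 1–3,
and solutions of the experiment / global-treatment / global-control dynamics
with common initial states. Then the cumulative experimental outcome of each
seller is bounded below by its global-control counterpart. -/
theorem stmt7 (N : ℕ) (H : ℝ) (hH : 0 < H)
    (eT eC ehT ehC : Fin N → ℝ → ℝ) (R : ℝ → ℝ)
    (f : Fin N → (Fin N → ℝ) → ℝ → ℝ) (Ψ : ℝ → ℝ → ℝ)
    (T : Finset (Fin N))
    (heq : ∀ (i : Fin N) (t : ℝ), t ∈ Set.Icc (0 : ℝ) H → ehC i t = ehT i t)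
    -- Assumption 1.(1): f_i non-increasing in r_j (j ≠ i), and the sum over any
    -- index set containing i is non-decreasing in r_i
    (hf_anti : ∀ (i j : Fin N), j ≠ i → ∀ (r : Fin N → ℝ) (R₀ x y : ℝ), x ≤ y →
      f i (Function.update r j y) R₀ ≤ f i (Function.update r j x) R₀)
    (hf_sum_mono : ∀ (I : Finset (Fin N)) (i : Fin N), i ∈ I →
      ∀ (r : Fin N → ℝ) (R₀ x y : ℝ), x ≤ y →
      ∑ j ∈ I, f j (Function.update r i x) R₀ ≤ ∑ j ∈ I, f j (Function.update r i y) R₀)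
    -- Assumption 1.(2): Ψ non-increasing in the state
    (hΨ_anti : ∀ e : ℝ, ∀ s s' : ℝ, s ≤ s' → Ψ s' e ≤ Ψ s e)
    -- Assumption 1.(4): Ψ non-decreasing in the estimated score
    (hΨ_mono : ∀ s : ℝ, ∀ e e' : ℝ, e ≤ e' → Ψ s e ≤ Ψ s e')
    -- Assumption 2: nonnegative outcomes, uniform treatment effect
    (he_nonneg : ∀ (i : Fin N) (t : ℝ), t ∈ Set.Icc (0 : ℝ) H → 0 ≤ eC i t)
    (he_mono : ∀ (i : Fin N) (t : ℝ), t ∈ Set.Icc (0 : ℝ) H → eC i t ≤ eT i t)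
    -- processes
    (SE rE fNE IE OE : Fin N → ℝ → ℝ)
    (SGT rGT fGT IGT OGT : Fin N → ℝ → ℝ)
    (SGC rGC fGC IGC OGC : Fin N → ℝ → ℝ)
    -- Assumption 3: continuity and finitely many zero-crossing times
    (hcont_e : ∀ i : Fin N, ContinuousOn (eT i) (Set.Icc 0 H) ∧
      ContinuousOn (eC i) (Set.Icc 0 H) ∧ ContinuousOn (ehT i) (Set.Icc 0 H) ∧
      ContinuousOn (ehC i) (Set.Icc 0 H))
    (hcont_R : Continuous R)
    (hcont_f : ∀ i : Fin N, Continuous (fun x : (Fin N → ℝ) × ℝ => f i x.1 x.2))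
    (hcont_Ψ : Continuous (fun x : ℝ × ℝ => Ψ x.1 x.2))
    (hfin : Set.Finite {t : ℝ | t ∈ Set.Icc (0 : ℝ) H ∧
      ∃ i : Fin N, fNE i t = 0 ∨ fGT i t = 0 ∨ fGC i t = 0})
    -- common initial states
    (hS0 : ∀ i : Fin N, SE i 0 = SGT i 0 ∧ SE i 0 = SGC i 0)
    -- naive experiment dynamics
    (hrE : ∀ (i : Fin N) (t : ℝ), t ∈ Set.Icc (0 : ℝ) H →
      rE i t = Ψ (SE i t) (if i ∈ T then ehT i t else ehC i t))
    (hfNE : ∀ (i : Fin N) (t : ℝ), t ∈ Set.Icc (0 : ℝ) H →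
      fNE i t = f i (fun j => rE j t) (R t))
    (hIE : ∀ (i : Fin N) (t : ℝ), t ∈ Set.Icc (0 : ℝ) H →
      IE i t = if 0 ≤ fNE i t then 1 else 0)
    (hOE : ∀ (i : Fin N) (t : ℝ), t ∈ Set.Icc (0 : ℝ) H →
      OE i t = IE i t * (if i ∈ T then eT i t else eC i t))
    (hOE_int : ∀ i : Fin N, IntervalIntegrable (OE i) MeasureTheory.volume 0 H)
    (hSE : ∀ (i : Fin N) (t : ℝ), t ∈ Set.Icc (0 : ℝ) H →
      SE i t = SE i 0 + ∫ s in (0:ℝ)..t, OE i s)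
    -- global treatment dynamics
    (hrGT : ∀ (i : Fin N) (t : ℝ), t ∈ Set.Icc (0 : ℝ) H →
      rGT i t = Ψ (SGT i t) (ehT i t))
    (hfGT : ∀ (i : Fin N) (t : ℝ), t ∈ Set.Icc (0 : ℝ) H →
      fGT i t = f i (fun j => rGT j t) (R t))
    (hIGT : ∀ (i : Fin N) (t : ℝ), t ∈ Set.Icc (0 : ℝ) H →
      IGT i t = if 0 ≤ fGT i t then 1 else 0)
    (hOGT : ∀ (i : Fin N) (t : ℝ), t ∈ Set.Icc (0 : ℝ) H →
      OGT i t = IGT i t * eT i t)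
    (hOGT_int : ∀ i : Fin N, IntervalIntegrable (OGT i) MeasureTheory.volume 0 H)
    (hSGT : ∀ (i : Fin N) (t : ℝ), t ∈ Set.Icc (0 : ℝ) H →
      SGT i t = SGT i 0 + ∫ s in (0:ℝ)..t, OGT i s)
    -- global control dynamics
    (hrGC : ∀ (i : Fin N) (t : ℝ), t ∈ Set.Icc (0 : ℝ) H →
      rGC i t = Ψ (SGC i t) (ehC i t))
    (hfGC : ∀ (i : Fin N) (t : ℝ), t ∈ Set.Icc (0 : ℝ) H →
      fGC i t = f i (fun j => rGC j t) (R t))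
    (hIGC : ∀ (i : Fin N) (t : ℝ), t ∈ Set.Icc (0 : ℝ) H →
      IGC i t = if 0 ≤ fGC i t then 1 else 0)
    (hOGC : ∀ (i : Fin N) (t : ℝ), t ∈ Set.Icc (0 : ℝ) H →
      OGC i t = IGC i t * eC i t)
    (hOGC_int : ∀ i : Fin N, IntervalIntegrable (OGC i) MeasureTheory.volume 0 H)
    (hSGC : ∀ (i : Fin N) (t : ℝ), t ∈ Set.Icc (0 : ℝ) H →
      SGC i t = SGC i 0 + ∫ s in (0:ℝ)..t, OGC i s) :
    ∀ (i : Fin N) (t : ℝ), t ∈ Set.Icc (0 : ℝ) H →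
      ∫ s in (0:ℝ)..t, OGC i s ≤ ∫ s in (0:ℝ)..t, OE i s := by
  have hE : IsPacingSolution f Ψ R ehC (fun i t => if i ∈ T then eT i t else eC i t) H
      SE rE fNE IE OE :=
    ⟨fun i t ht => by rw [hrE i t ht, heq i t ht, ite_self], hfNE, hIE, hOE, hOE_int, hSE⟩
  have hC : IsPacingSolution f Ψ R ehC eC H SGC rGC fGC IGC OGC :=
    ⟨hrGC, hfGC, hIGC, hOGC, hOGC_int, hSGC⟩
  have hee' (i : Fin N) (t : ℝ) (ht : t ∈ Icc 0 H) :
      eC i t ≤ if i ∈ T then eT i t else eC i t := by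
    split_ifs
    exacts [he_mono i t ht, le_rfl]
  have hscore (i : Fin N) : ContinuousOn (ehC i) (Icc 0 H) := (hcont_e i).2.2.2
  have hf (R₀ : ℝ) : IsCompetitive fun i b => f i b R₀ :=
    ⟨fun i j hji r x y => hf_anti i j hji r R₀ x y, fun B i hi r x y => hf_sum_mono B i hi r R₀ x y⟩
  exact stmt7_general hf hΨ_anti he_nonneg hee' hC hE
    (fun i _ => hC.eventuallyConst_indicator hcont_f hcont_Ψ hcont_R.continuousOn hscore
      (hfin.subset fun _ ht => ⟨ht.1, i, .inr (.inr ht.2)⟩))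
    (fun i _ => hE.eventuallyConst_indicator hcont_f hcont_Ψ hcont_R.continuousOn hscore
      (hfin.subset fun _ ht => ⟨ht.1, i, .inl ht.2⟩))
    fun i => (hS0 i).2
end

section
/- Consider the counterfactual interleaving experiment with feedback loops under a fixed partition {1,…,N} = 𝒯 ⊔ 𝒞, with e_i^C(t) = e_i^T(t) ≥ 0 for all i and t, and under Assumptions 1, 3, and 5 (monotonicity of f_i and of Ψ^T, Ψ^C; continuity and finitely many zero-crossing times of the threshold functions; and existence of α > 1 with Ψ^T(s, ê_i^T(t)) = α·Ψ^C(s, ê_i^C(t)) for all s ≥ 0, i, t, and f_i((αr_1,…,αr_N), R) ≥ f_i((r_1,…,r_N), R) whenever f_i((r_1,…,r_N), R) ≥ 0). Suppose the experiment dynamics, the global treatment dynamics, and the global control dynamics each admit solutions with common initial states. Then for every seller i = 1,…,N and every t ∈ [0,H], ∫₀^t O_i^{E}(s) ds ≤ ∫₀^t O_i^{GT}(s) ds and ∫₀^t O_i^{E}(s) ds ≥ ∫₀^t O_i^{GC}(s) ds. -/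
/-!
A gate that is open under control stays open under treatment in the same state, so the experiment is
a subsolution of the global treatment dynamics and a supersolution of the global control dynamics.
The claim is then two instances of a comparison principle for a single pacing system: if
trajectories `A` and `B` start together, `A` accumulates no faster than its own gates allow and `B`
at least as fast as its own gates require, then `A` never overtakes `B`.

To see this, suppose `A` has stayed below `B` up to time `x`. As the thresholds have finitely many
zeros, all gates are constant just after `x`. A seller whose gate is closed in `A` or open in `B`
then accumulates no faster in `A`, so it does not overtake. If some sellers did overtake, the gates
of all of them would be open in `A` and closed in `B`. But these sellers have lower scores in `A`
and the others have higher scores, so the total threshold value of the overtaking sellers is no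
larger in `A` than in `B`, contradicting the signs.
-/

open Function MeasureTheory Set Topology

section Competition

variable {ι X M : Type*} [DecidableEq ι] [Preorder X]

/-- Competition for selection: raising one score lowers the threshold value of every other seller,
but never lowers the total over a group containing the seller whose score is raised. -/
structure IsCompetitive_s12 [AddCommMonoid M] [Preorder M] (f : ι → (ι → X) → M) : Prop where
  antitone_cross : ∀ i j, j ≠ i → ∀ r, Antitone fun x => f i (update r j x)
  monotone_group : ∀ (I : Finset ι) (i : ι), i ∈ I → ∀ r,
    Monotone fun x => ∑ j ∈ I, f j (update r i x)

theorem IsCompetitive_s12.sum_le_sum [Finite ι] [AddCommMonoid M] [PartialOrder M]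
    [IsOrderedAddMonoid M] {f : ι → (ι → X) → M} (hf : IsCompetitive_s12 f) {a b : ι → X}
    {I : Finset ι} (h_mem : ∀ i ∈ I, a i ≤ b i) (h_notMem : ∀ i ∉ I, b i ≤ a i) :
    ∑ j ∈ I, f j a ≤ ∑ j ∈ I, f j b := by
  have := Fintype.ofFinite ι
  have raise_on (s : Finset ι) : ∑ j ∈ I, f j a ≤ ∑ j ∈ I, f j (s.piecewise b a) := by
    induction s using Finset.induction_on with
    | empty => simp
    | insert k s hk ih =>
      have h_self : update (s.piecewise b a) k (a k) = s.piecewise b a := by simp [hk]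
      rw [Finset.piecewise_insert]
      refine ih.trans ?_
      conv_lhs => rw [← h_self]
      by_cases hkI : k ∈ I
      · exact hf.monotone_group I k hkI _ (h_mem k hkI)
      · exact Finset.sum_le_sum fun j hj =>
          hf.antitone_cross j k (ne_of_mem_of_not_mem hj hkI).symm _ (h_notMem k hkI)
  simpa using raise_on Finset.univ

theorem IsCompetitive_s12.exists_lt_and_neg_or_nonneg [Finite ι] [AddCommMonoid M] [LinearOrder M]
    [IsOrderedCancelAddMonoid M] {f : ι → (ι → X) → M} (hf : IsCompetitive_s12 f)
    {S : Type*} [LinearOrder S] {ψ : ι → S → X} (hψ : ∀ i, Antitone (ψ i)) {s s' : ι → S}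
    (h : ∃ i, s' i < s i) :
    ∃ i, s' i < s i ∧ (f i (fun j => ψ j (s j)) < 0 ∨ 0 ≤ f i (fun j => ψ j (s' j))) := by
  have := Fintype.ofFinite ι
  by_contra! h_signs
  let I : Finset ι := {i | s' i < s i}
  have mem_I {i : ι} : i ∈ I ↔ s' i < s i := by simp [I]
  have h_sum : ∑ i ∈ I, f i (fun j => ψ j (s j)) ≤ ∑ i ∈ I, f i (fun j => ψ j (s' j)) :=
    hf.sum_le_sum (fun i hi => hψ i (mem_I.1 hi).le)
      fun i hi => hψ i (not_lt.1 (mt mem_I.2 hi))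
  have h_nonneg : 0 ≤ ∑ i ∈ I, f i (fun j => ψ j (s j)) :=
    Finset.sum_nonneg fun i hi => (h_signs i (mem_I.1 hi)).1
  have h_neg : ∑ i ∈ I, f i (fun j => ψ j (s' j)) < 0 :=
    Finset.sum_neg (fun i hi => (h_signs i (mem_I.1 hi)).2) (h.imp fun _ => mem_I.2)
  exact (h_nonneg.trans h_sum).not_gt h_neg

end Competition

theorem eventually_nhdsGT_neg_or_nonneg {α β : Type*} [ConditionallyCompleteLinearOrder α]
    [TopologicalSpace α] [OrderTopology α] [DenselyOrdered α] [LinearOrder β] [TopologicalSpace β]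
    [OrderClosedTopology β] [Zero β] {a b x : α} {g : α → β} (hg : ContinuousOn g (Icc a b))
    (h_zeros : {t ∈ Icc a b | g t = 0}.Finite) (hx : x ∈ Ico a b) :
    (∀ᶠ t in 𝓝[>] x, g t < 0) ∨ ∀ᶠ t in 𝓝[>] x, 0 ≤ g t := by
  have h_ne : {t ∈ Icc a b | g t = 0}ᶜ ∈ 𝓝[>] x :=
    nhdsGT_le_nhdsNE x (nhdsNE_le_cofinite x h_zeros.compl_mem_cofinite)
  obtain ⟨u, ⟨hxu, hub⟩, hu⟩ := (mem_nhdsGT_iff_exists_mem_Ioc_Ioo_subset hx.2).1 h_ne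
  have h_sub : Ioo x u ⊆ Icc a b := fun t ht => ⟨hx.1.trans ht.1.le, ht.2.le.trans hub⟩
  have h_nhds : Ioo x u ∈ 𝓝[>] x := Ioo_mem_nhdsGT hxu
  by_cases h_neg : ∃ s ∈ Ioo x u, g s < 0
  · obtain ⟨s, hs, hgs⟩ := h_neg
    left
    filter_upwards [h_nhds] with t ht
    by_contra! hgt
    obtain ⟨v, hv, hgv⟩ := isPreconnected_Ioo.intermediate_value hs ht (hg.mono h_sub) ⟨hgs.le, hgt⟩
    exact hu hv ⟨h_sub hv, hgv⟩
  · push Not at h_neg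
    exact .inr (Filter.mem_of_superset h_nhds h_neg)

/-- The state `S` accumulates the integrable outcome rate `O` on `[a, b]`. -/
structure HasRateOn (S O : ℝ → ℝ) (a b : ℝ) : Prop where
  intervalIntegrable : IntervalIntegrable O volume a b
  eq_add_integral : ∀ t ∈ Icc a b, S t = S a + ∫ s in a..t, O s

namespace HasRateOn

variable {S O S' O' : ℝ → ℝ} {a b u v : ℝ}

theorem continuousOn (h : HasRateOn S O a b) : ContinuousOn S (Icc a b) :=
  (continuousOn_const.add ((intervalIntegral.continuousOn_primitive_interval'
    h.intervalIntegrable left_mem_uIcc).mono Icc_subset_uIcc)).congr h.eq_add_integral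

theorem intervalIntegrable_of_mem (h : HasRateOn S O a b) (hu : u ∈ Icc a b)
    (hv : v ∈ Icc a b) : IntervalIntegrable O volume u v :=
  h.intervalIntegrable.mono_set (uIcc_subset_uIcc (Icc_subset_uIcc hu) (Icc_subset_uIcc hv))

theorem eq_add_integral_of_mem (h : HasRateOn S O a b) (hu : u ∈ Icc a b) (hv : v ∈ Icc a b) :
    S v = S u + ∫ s in u..v, O s := by
  have ha : a ∈ Icc a b := left_mem_Icc.2 (hu.1.trans hu.2)
  rw [h.eq_add_integral u hu, h.eq_add_integral v hv, add_assoc,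
    intervalIntegral.integral_add_adjacent_intervals (h.intervalIntegrable_of_mem ha hu)
      (h.intervalIntegrable_of_mem hu hv)]

theorem le_of_rate_le (h : HasRateOn S O a b) (h' : HasRateOn S' O' a b) (hu : u ∈ Icc a b)
    (hv : v ∈ Icc a b) (huv : u ≤ v) (h_start : S u ≤ S' u)
    (h_rate : ∀ t ∈ Ioo u v, O t ≤ O' t) : S v ≤ S' v := by
  rw [h.eq_add_integral_of_mem hu hv, h'.eq_add_integral_of_mem hu hv]
  exact add_le_add h_start (intervalIntegral.integral_mono_on_of_le_Ioo huv
    (h.intervalIntegrable_of_mem hu hv) (h'.intervalIntegrable_of_mem hu hv) h_rate)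

theorem nonneg (h : HasRateOn S O a b) (h_start : 0 ≤ S a) (h_rate : ∀ t ∈ Icc a b, 0 ≤ O t) :
    ∀ t ∈ Icc a b, 0 ≤ S t := fun t ht => by
  rw [h.eq_add_integral t ht]
  exact add_nonneg h_start (intervalIntegral.integral_nonneg ht.1 fun s hs =>
    h_rate s ⟨hs.1, hs.2.trans ht.2⟩)

theorem integral_le_integral (h : HasRateOn S O a b) (h' : HasRateOn S' O' a b)
    (h_start : S a = S' a) (hu : u ∈ Icc a b) (h_le : S u ≤ S' u) :
    ∫ s in a..u, O s ≤ ∫ s in a..u, O' s := by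
  rwa [h.eq_add_integral u hu, h'.eq_add_integral u hu, h_start, add_le_add_iff_left] at h_le

theorem forall_le_of_leader {ι : Type*} [Finite ι] {S O S' O' : ι → ℝ → ℝ} {P : ι → ℝ → Prop}
    (h : ∀ i, HasRateOn (S i) (O i) a b) (h' : ∀ i, HasRateOn (S' i) (O' i) a b)
    (h_start : ∀ i, S i a ≤ S' i a)
    (h_decided : ∀ i, ∀ x ∈ Ico a b, (∀ᶠ t in 𝓝[>] x, P i t) ∨ ∀ᶠ t in 𝓝[>] x, ¬ P i t)
    (h_rate : ∀ i, ∀ t ∈ Icc a b, P i t → O i t ≤ O' i t)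
    (h_leader : ∀ t ∈ Icc a b, (∃ i, S' i t < S i t) → ∃ i, S' i t < S i t ∧ P i t) :
    ∀ t ∈ Icc a b, ∀ i, S i t ≤ S' i t := by
  let G : Set ℝ := {t | ∀ i, S i t ≤ S' i t}
  have h_closed : IsClosed (G ∩ Icc a b) := by
    rw [inter_comm]
    exact isClosed_Icc.isClosed_le (continuousOn_pi.2 fun i => (h i).continuousOn)
      (continuousOn_pi.2 fun i => (h' i).continuousOn)
  refine h_closed.Icc_subset_of_forall_mem_nhdsWithin h_start fun x ⟨hxG, hx⟩ => ?_
  have h_le_of_P : ∀ᶠ t in 𝓝[>] x, ∀ i, P i t → S i t ≤ S' i t := by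
    refine Filter.eventually_all.2 fun i => ?_
    rcases h_decided i x hx with hP | hP
    · obtain ⟨u, ⟨hxu, hub⟩, hu⟩ := (mem_nhdsGT_iff_exists_mem_Ioc_Ioo_subset hx.2).1 hP
      have h_sub : Ioo x u ⊆ Icc a b := fun t ht => ⟨hx.1.trans ht.1.le, ht.2.le.trans hub⟩
      filter_upwards [Ioo_mem_nhdsGT hxu] with t ht _
      refine (h i).le_of_rate_le (h' i) (Ico_subset_Icc_self hx) (h_sub ht) ht.1.le (hxG i)
        fun s hs => ?_
      have hs : s ∈ Ioo x u := ⟨hs.1, hs.2.trans ht.2⟩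
      exact h_rate i s (h_sub hs) (hu hs)
    · filter_upwards [hP] with t ht ht' using absurd ht' ht
  filter_upwards [h_le_of_P, Ioo_mem_nhdsGT hx.2] with t ht htx
  by_contra h_lead
  obtain ⟨i, hi, hPi⟩ := h_leader t ⟨hx.1.trans htx.1.le, htx.2.le⟩ (by simpa [G] using h_lead)
  exact (ht i hPi).not_gt hi

end HasRateOn

/-- The selection indicator `1{g ≥ 0}` of a threshold value `g`, as a real number. -/
noncomputable def gate (g : ℝ) : ℝ := if 0 ≤ g then 1 else 0

theorem gate_nonneg (g : ℝ) : 0 ≤ gate g := by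
  unfold gate; split_ifs <;> norm_num

theorem gate_le_gate {g g' : ℝ} (h : 0 ≤ g → 0 ≤ g') : gate g ≤ gate g' := by
  unfold gate; split_ifs <;> simp_all

/-- The data of a paced marketplace: the true metrics `e_i`, the estimated scores `ê_i`, the
reserve `R`, the threshold functions `f_i` and the pacing function `Ψ`. -/
structure PacingSystem (ι : Type*) where
  metric : ι → ℝ → ℝ
  estimate : ι → ℝ → ℝ
  reserve : ℝ → ℝ
  threshold : ι → (ι → ℝ) → ℝ → ℝ
  pacing : ℝ → ℝ → ℝ

namespace PacingSystem

variable {ι : Type*}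

/-- The threshold value of seller `i` at time `t`, when the sellers are in the states `s`. -/
def thresholdAt (M : PacingSystem ι) (s : ι → ℝ) (t : ℝ) (i : ι) : ℝ :=
  M.threshold i (fun j => M.pacing (s j) (M.estimate j t)) (M.reserve t)

theorem thresholdAt_nonneg_of_scaling {MT MC : PacingSystem ι} {α t : ℝ} {s : ι → ℝ} {i : ι}
    (h_reserve : MT.reserve t = MC.reserve t)
    (h_pacing : ∀ j, MT.pacing (s j) (MT.estimate j t) = α * MC.pacing (s j) (MC.estimate j t))
    (h_scale : ∀ r R₀, 0 ≤ MC.threshold i r R₀ → 0 ≤ MT.threshold i (fun j => α * r j) R₀)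
    (h : 0 ≤ MC.thresholdAt s t i) : 0 ≤ MT.thresholdAt s t i := by
  simp only [thresholdAt, h_pacing, h_reserve]
  exact h_scale _ _ h

/-- Competition between sellers, pacing that decreases in the state, and continuity of the data on
`[0, H]`. -/
structure IsAdmissible [DecidableEq ι] (M : PacingSystem ι) (H : ℝ) : Prop where
  competitive : ∀ R₀, IsCompetitive_s12 fun i r => M.threshold i r R₀
  antitone_pacing : ∀ e, Antitone fun s => M.pacing s e
  continuous_threshold : ∀ i, Continuous (uncurry (M.threshold i))
  continuous_pacing : Continuous (uncurry M.pacing)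
  continuousOn_estimate : ∀ i, ContinuousOn (M.estimate i) (Icc 0 H)
  continuousOn_reserve : ContinuousOn M.reserve (Icc 0 H)

/-- On `[0, H]`, `r` and `g` are the scores and threshold values which `M` assigns to the
states `S`. -/
structure IsScoring (M : PacingSystem ι) (H : ℝ) (S r g : ι → ℝ → ℝ) : Prop where
  score_eq : ∀ i t, t ∈ Icc 0 H → r i t = M.pacing (S i t) (M.estimate i t)
  threshold_eq : ∀ i t, t ∈ Icc 0 H → g i t = M.threshold i (fun j => r j t) (M.reserve t)

/-- The global dynamics of `M` on `[0, H]`, with states `S`, scores `r`, threshold values `g`,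
selection indicators `I` and outcome rates `O`. -/
structure IsGlobalSolution (M : PacingSystem ι) (H : ℝ) (S r g I O : ι → ℝ → ℝ) : Prop
    extends M.IsScoring H S r g where
  selected_eq : ∀ i t, t ∈ Icc 0 H → I i t = gate (g i t)
  outcome_eq : ∀ i t, t ∈ Icc 0 H → O i t = I i t * M.metric i t
  hasRateOn : ∀ i, HasRateOn (S i) (O i) 0 H

/-- The counterfactual interleaving experiment on `[0, H]`: from the common states `S`, full scores
`rT`, `rC` and threshold values `gT`, `gC` are computed under both systems, and sellers in `T` are
selected by the former, the others by the latter. -/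
structure IsInterleavingSolution [DecidableEq ι] (MT MC : PacingSystem ι) (T : Finset ι) (H : ℝ)
    (S rT rC gT gC I O : ι → ℝ → ℝ) : Prop where
  treatment : MT.IsScoring H S rT gT
  control : MC.IsScoring H S rC gC
  selected_eq : ∀ i t, t ∈ Icc 0 H → I i t = if i ∈ T then gate (gT i t) else gate (gC i t)
  outcome_eq : ∀ i t, t ∈ Icc 0 H →
    O i t = I i t * if i ∈ T then MT.metric i t else MC.metric i t
  hasRateOn : ∀ i, HasRateOn (S i) (O i) 0 H

variable {M : PacingSystem ι} {H : ℝ}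

theorem IsScoring.eq_thresholdAt {S r g : ι → ℝ → ℝ} (h : M.IsScoring H S r g) (i : ι) {t : ℝ}
    (ht : t ∈ Icc 0 H) : g i t = M.thresholdAt (fun j => S j t) t i := by
  simp only [h.threshold_eq i t ht, h.score_eq _ t ht, thresholdAt]

theorem IsScoring.continuousOn [DecidableEq ι] {S r g : ι → ℝ → ℝ} (h : M.IsScoring H S r g)
    (hM : M.IsAdmissible H) (hS : ∀ i, ContinuousOn (S i) (Icc 0 H)) (i : ι) :
    ContinuousOn (g i) (Icc 0 H) := by
  have h_scores : ContinuousOn (fun t j => r j t) (Icc 0 H) := continuousOn_pi.2 fun j =>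
    (hM.continuous_pacing.comp_continuousOn
      ((hS j).prodMk (hM.continuousOn_estimate j))).congr (h.score_eq j)
  exact ((hM.continuous_threshold i).comp_continuousOn
    (h_scores.prodMk hM.continuousOn_reserve)).congr (h.threshold_eq i)

theorem IsScoring.le_of_subsolution_of_supersolution [Finite ι] [DecidableEq ι]
    {S r g O S' r' g' O' : ι → ℝ → ℝ} (h : M.IsScoring H S r g)
    (hM : M.IsAdmissible H) (h_metric : ∀ i, ∀ t ∈ Icc 0 H, 0 ≤ M.metric i t)
    (h' : M.IsScoring H S' r' g')
    (h_rate : ∀ i, HasRateOn (S i) (O i) 0 H) (h_rate' : ∀ i, HasRateOn (S' i) (O' i) 0 H)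
    (h_zeros : ∀ i, {t ∈ Icc 0 H | g i t = 0}.Finite)
    (h_zeros' : ∀ i, {t ∈ Icc 0 H | g' i t = 0}.Finite)
    (h_start : ∀ i, S i 0 ≤ S' i 0)
    (h_sub : ∀ i, ∀ t ∈ Icc 0 H, O i t ≤ gate (g i t) * M.metric i t)
    (h_super : ∀ i, ∀ t ∈ Icc 0 H, gate (g' i t) * M.metric i t ≤ O' i t) :
    ∀ t ∈ Icc 0 H, ∀ i, S i t ≤ S' i t := by
  refine HasRateOn.forall_le_of_leader (P := fun i t => g i t < 0 ∨ 0 ≤ g' i t)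
    h_rate h_rate' h_start (fun i x hx => ?_) (fun i t ht hP => ?_) (fun t ht h_lead => ?_)
  · rcases eventually_nhdsGT_neg_or_nonneg
      (h.continuousOn hM (fun j => (h_rate j).continuousOn) i) (h_zeros i) hx with hg | hg
    · exact .inl (hg.mono fun _ => .inl)
    rcases eventually_nhdsGT_neg_or_nonneg
      (h'.continuousOn hM (fun j => (h_rate' j).continuousOn) i) (h_zeros' i) hx with hg' | hg'
    · exact .inr ((hg.and hg').mono fun _ hgg => not_or.2 ⟨hgg.1.not_gt, hgg.2.not_ge⟩)
    · exact .inl (hg'.mono fun _ => .inr)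
  · have h_gate : gate (g i t) ≤ gate (g' i t) :=
      gate_le_gate fun h_open => hP.resolve_left h_open.not_gt
    calc O i t ≤ gate (g i t) * M.metric i t := h_sub i t ht
      _ ≤ gate (g' i t) * M.metric i t :=
        mul_le_mul_of_nonneg_right h_gate (h_metric i t ht)
      _ ≤ O' i t := h_super i t ht
  · simp only [h.eq_thresholdAt _ ht, h'.eq_thresholdAt _ ht]
    exact (hM.competitive (M.reserve t)).exists_lt_and_neg_or_nonneg
      (fun j => hM.antitone_pacing (M.estimate j t)) h_lead

theorem IsGlobalSolution.outcome_eq_gate_mul {S r g I O : ι → ℝ → ℝ}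
    (h : M.IsGlobalSolution H S r g I O) (i : ι) {t : ℝ} (ht : t ∈ Icc 0 H) :
    O i t = gate (g i t) * M.metric i t := by
  rw [h.outcome_eq i t ht, h.selected_eq i t ht]

namespace IsInterleavingSolution

variable [DecidableEq ι] {MT MC : PacingSystem ι} {T : Finset ι}
  {S rT rC gT gC I O : ι → ℝ → ℝ}

theorem outcome_eq_ite (h : MT.IsInterleavingSolution MC T H S rT rC gT gC I O)
    (i : ι) {t : ℝ} (ht : t ∈ Icc 0 H) :
    O i t = if i ∈ T then gate (gT i t) * MT.metric i t else gate (gC i t) * MC.metric i t := by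
  rw [h.outcome_eq i t ht, h.selected_eq i t ht]
  split_ifs <;> rfl

theorem state_nonneg (h : MT.IsInterleavingSolution MC T H S rT rC gT gC I O)
    (h_start : ∀ i, 0 ≤ S i 0)
    (h_metric : ∀ i, ∀ t ∈ Icc 0 H, 0 ≤ MC.metric i t ∧ MC.metric i t ≤ MT.metric i t) (i : ι) :
    ∀ t ∈ Icc 0 H, 0 ≤ S i t := by
  refine (h.hasRateOn i).nonneg (h_start i) fun t ht => ?_
  obtain ⟨h_nonneg, h_le⟩ := h_metric i t ht
  rw [h.outcome_eq_ite i ht]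
  split_ifs
  · exact mul_nonneg (gate_nonneg _) (h_nonneg.trans h_le)
  · exact mul_nonneg (gate_nonneg _) h_nonneg

theorem outcome_bounds (h : MT.IsInterleavingSolution MC T H S rT rC gT gC I O)
    {i : ι} {t : ℝ} (ht : t ∈ Icc 0 H)
    (h_metric : 0 ≤ MC.metric i t ∧ MC.metric i t ≤ MT.metric i t)
    (h_open : 0 ≤ gC i t → 0 ≤ gT i t) :
    gate (gC i t) * MC.metric i t ≤ O i t ∧ O i t ≤ gate (gT i t) * MT.metric i t := by
  have h_le : gate (gC i t) * MC.metric i t ≤ gate (gT i t) * MT.metric i t :=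
    mul_le_mul (gate_le_gate h_open) h_metric.2 h_metric.1 (gate_nonneg _)
  rw [h.outcome_eq_ite i ht]
  split_ifs
  · exact ⟨h_le, le_rfl⟩
  · exact ⟨le_rfl, h_le⟩

end IsInterleavingSolution

end PacingSystem

theorem stmt12_general {ι : Type*} [Finite ι] [DecidableEq ι] {H : ℝ} {MT MC : PacingSystem ι}
    (T : Finset ι) (hMT : MT.IsAdmissible H) (hMC : MC.IsAdmissible H)
    (h_metric : ∀ i, ∀ t ∈ Icc 0 H, 0 ≤ MC.metric i t ∧ MC.metric i t ≤ MT.metric i t)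
    (h_open : ∀ t ∈ Icc 0 H, ∀ s, (∀ j, 0 ≤ s j) → ∀ i,
      0 ≤ MC.thresholdAt s t i → 0 ≤ MT.thresholdAt s t i)
    {SE rT rC gT gC IE OE SGT rGT gGT IGT OGT SGC rGC gGC IGC OGC : ι → ℝ → ℝ}
    (h_zeros : {t | t ∈ Icc 0 H ∧
      ∃ i, gT i t = 0 ∨ gC i t = 0 ∨ gGT i t = 0 ∨ gGC i t = 0}.Finite)
    (h_start : ∀ i, SE i 0 = SGT i 0 ∧ SE i 0 = SGC i 0) (h_start_nonneg : ∀ i, 0 ≤ SE i 0)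
    (hE : MT.IsInterleavingSolution MC T H SE rT rC gT gC IE OE)
    (hGT : MT.IsGlobalSolution H SGT rGT gGT IGT OGT)
    (hGC : MC.IsGlobalSolution H SGC rGC gGC IGC OGC) (i : ι) (t : ℝ) (ht : t ∈ Icc 0 H) :
    (∫ s in (0 : ℝ)..t, OE i s) ≤ ∫ s in (0 : ℝ)..t, OGT i s ∧
      (∫ s in (0 : ℝ)..t, OGC i s) ≤ ∫ s in (0 : ℝ)..t, OE i s := by
  have h_bounds (j : ι) (u : ℝ) (hu : u ∈ Icc 0 H) :=
    hE.outcome_bounds hu (h_metric j u hu) fun h_gate => by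
      rw [hE.treatment.eq_thresholdAt j hu]
      rw [hE.control.eq_thresholdAt j hu] at h_gate
      exact h_open u hu _ (fun k => hE.state_nonneg h_start_nonneg h_metric k u hu) j h_gate
  have h_upper : SE i t ≤ SGT i t :=
    hE.treatment.le_of_subsolution_of_supersolution hMT
      (fun j u hu => (h_metric j u hu).1.trans (h_metric j u hu).2) hGT.toIsScoring
      hE.hasRateOn hGT.hasRateOn
      (fun j => h_zeros.subset fun _ ⟨hu, hg⟩ => ⟨hu, j, .inl hg⟩)
      (fun j => h_zeros.subset fun _ ⟨hu, hg⟩ => ⟨hu, j, .inr (.inr (.inl hg))⟩)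
      (fun j => (h_start j).1.le) (fun j u hu => (h_bounds j u hu).2)
      (fun j _ hu => (hGT.outcome_eq_gate_mul j hu).ge) t ht i
  have h_lower : SGC i t ≤ SE i t :=
    hGC.toIsScoring.le_of_subsolution_of_supersolution hMC
      (fun j u hu => (h_metric j u hu).1) hE.control hGC.hasRateOn hE.hasRateOn
      (fun j => h_zeros.subset fun _ ⟨hu, hg⟩ => ⟨hu, j, .inr (.inr (.inr hg))⟩)
      (fun j => h_zeros.subset fun _ ⟨hu, hg⟩ => ⟨hu, j, .inr (.inl hg)⟩)
      (fun j => (h_start j).2.ge) (fun j _ hu => (hGC.outcome_eq_gate_mul j hu).le)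
      (fun j u hu => (h_bounds j u hu).1) t ht i
  exact ⟨(hE.hasRateOn i).integral_le_integral (hGT.hasRateOn i) (h_start i).1 ht h_upper,
    (hGC.hasRateOn i).integral_le_integral (hE.hasRateOn i) (h_start i).2.symm ht h_lower⟩

/-- key pathwise claim in the proof of Theorem 3: counterfactual
interleaving experiment with feedback loops under a fixed partition `𝒯 = T`,
`𝒞 = Tᶜ`, with `e_i^C = e_i^T ≥ 0`, under Assumptions 1, 3 and 5, with
solutions of the experiment / global-treatment / global-control dynamics
having common (nonnegative) initial states. Then each seller's cumulative
experimental outcome is bounded above by its global-treatment counterpart and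
below by its global-control counterpart. -/
theorem stmt12 (N : ℕ) (H : ℝ) (hH : 0 < H)
    (eT eC ehT ehC : Fin N → ℝ → ℝ) (R : ℝ → ℝ)
    (f : Fin N → (Fin N → ℝ) → ℝ → ℝ) (ΨT ΨC : ℝ → ℝ → ℝ)
    (T : Finset (Fin N))
    -- equal, nonnegative true metrics
    (he_eq : ∀ (i : Fin N) (t : ℝ), t ∈ Set.Icc (0 : ℝ) H → eC i t = eT i t)
    (he_nonneg : ∀ (i : Fin N) (t : ℝ), t ∈ Set.Icc (0 : ℝ) H → 0 ≤ eC i t)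
    -- Assumption 1
    (hf_anti : ∀ (i j : Fin N), j ≠ i → ∀ (r : Fin N → ℝ) (R₀ x y : ℝ), x ≤ y →
      f i (Function.update r j y) R₀ ≤ f i (Function.update r j x) R₀)
    (hf_sum_mono : ∀ (I : Finset (Fin N)) (i : Fin N), i ∈ I →
      ∀ (r : Fin N → ℝ) (R₀ x y : ℝ), x ≤ y →
      ∑ j ∈ I, f j (Function.update r i x) R₀ ≤ ∑ j ∈ I, f j (Function.update r i y) R₀)
    (hΨT_anti : ∀ e : ℝ, ∀ s s' : ℝ, s ≤ s' → ΨT s' e ≤ ΨT s e)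
    (hΨC_anti : ∀ e : ℝ, ∀ s s' : ℝ, s ≤ s' → ΨC s' e ≤ ΨC s e)
    (hΨT_mono : ∀ s : ℝ, ∀ e e' : ℝ, e ≤ e' → ΨT s e ≤ ΨT s e')
    (hΨC_mono : ∀ s : ℝ, ∀ e e' : ℝ, e ≤ e' → ΨC s e ≤ ΨC s e')
    -- Assumption 5
    (α : ℝ) (hα : 1 < α)
    (hΨα : ∀ s : ℝ, 0 ≤ s → ∀ (i : Fin N) (t : ℝ), t ∈ Set.Icc (0 : ℝ) H →
      ΨT s (ehT i t) = α * ΨC s (ehC i t))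
    (hfα : ∀ (i : Fin N) (r : Fin N → ℝ) (R₀ : ℝ),
      0 ≤ f i r R₀ → f i r R₀ ≤ f i (fun j => α * r j) R₀)
    -- processes
    (SE rT rC fCET fCEC IE OE : Fin N → ℝ → ℝ)
    (SGT rGT fGT IGT OGT : Fin N → ℝ → ℝ)
    (SGC rGC fGC IGC OGC : Fin N → ℝ → ℝ)
    -- Assumption 3 (with f^{NE} replaced by f^{CE,T} and f^{CE,C})
    (hcont_e : ∀ i : Fin N, ContinuousOn (eT i) (Set.Icc 0 H) ∧
      ContinuousOn (eC i) (Set.Icc 0 H) ∧ ContinuousOn (ehT i) (Set.Icc 0 H) ∧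
      ContinuousOn (ehC i) (Set.Icc 0 H))
    (hcont_R : Continuous R)
    (hcont_f : ∀ i : Fin N, Continuous (fun x : (Fin N → ℝ) × ℝ => f i x.1 x.2))
    (hcont_ΨT : Continuous (fun x : ℝ × ℝ => ΨT x.1 x.2))
    (hcont_ΨC : Continuous (fun x : ℝ × ℝ => ΨC x.1 x.2))
    (hfin : Set.Finite {t : ℝ | t ∈ Set.Icc (0 : ℝ) H ∧
      ∃ i : Fin N, fCET i t = 0 ∨ fCEC i t = 0 ∨ fGT i t = 0 ∨ fGC i t = 0})
    -- common, nonnegative initial states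
    (hS0 : ∀ i : Fin N, SE i 0 = SGT i 0 ∧ SE i 0 = SGC i 0)
    (hS0_nonneg : ∀ i : Fin N, 0 ≤ SE i 0)
    -- counterfactual interleaving experiment dynamics
    (hrT : ∀ (i : Fin N) (t : ℝ), t ∈ Set.Icc (0 : ℝ) H →
      rT i t = ΨT (SE i t) (ehT i t))
    (hrC : ∀ (i : Fin N) (t : ℝ), t ∈ Set.Icc (0 : ℝ) H →
      rC i t = ΨC (SE i t) (ehC i t))
    (hfCET : ∀ (i : Fin N) (t : ℝ), t ∈ Set.Icc (0 : ℝ) H →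
      fCET i t = f i (fun j => rT j t) (R t))
    (hfCEC : ∀ (i : Fin N) (t : ℝ), t ∈ Set.Icc (0 : ℝ) H →
      fCEC i t = f i (fun j => rC j t) (R t))
    (hIE : ∀ (i : Fin N) (t : ℝ), t ∈ Set.Icc (0 : ℝ) H →
      IE i t = if i ∈ T then (if 0 ≤ fCET i t then 1 else 0)
               else (if 0 ≤ fCEC i t then 1 else 0))
    (hOE : ∀ (i : Fin N) (t : ℝ), t ∈ Set.Icc (0 : ℝ) H →
      OE i t = IE i t * (if i ∈ T then eT i t else eC i t))
    (hOE_int : ∀ i : Fin N, IntervalIntegrable (OE i) MeasureTheory.volume 0 H)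
    (hSE : ∀ (i : Fin N) (t : ℝ), t ∈ Set.Icc (0 : ℝ) H →
      SE i t = SE i 0 + ∫ s in (0:ℝ)..t, OE i s)
    -- global treatment dynamics
    (hrGT : ∀ (i : Fin N) (t : ℝ), t ∈ Set.Icc (0 : ℝ) H →
      rGT i t = ΨT (SGT i t) (ehT i t))
    (hfGT : ∀ (i : Fin N) (t : ℝ), t ∈ Set.Icc (0 : ℝ) H →
      fGT i t = f i (fun j => rGT j t) (R t))
    (hIGT : ∀ (i : Fin N) (t : ℝ), t ∈ Set.Icc (0 : ℝ) H →
      IGT i t = if 0 ≤ fGT i t then 1 else 0)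
    (hOGT : ∀ (i : Fin N) (t : ℝ), t ∈ Set.Icc (0 : ℝ) H →
      OGT i t = IGT i t * eT i t)
    (hOGT_int : ∀ i : Fin N, IntervalIntegrable (OGT i) MeasureTheory.volume 0 H)
    (hSGT : ∀ (i : Fin N) (t : ℝ), t ∈ Set.Icc (0 : ℝ) H →
      SGT i t = SGT i 0 + ∫ s in (0:ℝ)..t, OGT i s)
    -- global control dynamics
    (hrGC : ∀ (i : Fin N) (t : ℝ), t ∈ Set.Icc (0 : ℝ) H →
      rGC i t = ΨC (SGC i t) (ehC i t))
    (hfGC : ∀ (i : Fin N) (t : ℝ), t ∈ Set.Icc (0 : ℝ) H →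
      fGC i t = f i (fun j => rGC j t) (R t))
    (hIGC : ∀ (i : Fin N) (t : ℝ), t ∈ Set.Icc (0 : ℝ) H →
      IGC i t = if 0 ≤ fGC i t then 1 else 0)
    (hOGC : ∀ (i : Fin N) (t : ℝ), t ∈ Set.Icc (0 : ℝ) H →
      OGC i t = IGC i t * eC i t)
    (hOGC_int : ∀ i : Fin N, IntervalIntegrable (OGC i) MeasureTheory.volume 0 H)
    (hSGC : ∀ (i : Fin N) (t : ℝ), t ∈ Set.Icc (0 : ℝ) H →
      SGC i t = SGC i 0 + ∫ s in (0:ℝ)..t, OGC i s) :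
    ∀ (i : Fin N) (t : ℝ), t ∈ Set.Icc (0 : ℝ) H →
      (∫ s in (0:ℝ)..t, OE i s) ≤ (∫ s in (0:ℝ)..t, OGT i s) ∧
      (∫ s in (0:ℝ)..t, OGC i s) ≤ (∫ s in (0:ℝ)..t, OE i s) := by
  have hf (R₀ : ℝ) : IsCompetitive_s12 fun i r => f i r R₀ :=
    ⟨fun i j hji r _ _ => hf_anti i j hji r R₀ _ _, fun I i hi r _ _ => hf_sum_mono I i hi r R₀ _ _⟩
  exact stmt12_general (MT := ⟨eT, ehT, R, f, ΨT⟩) (MC := ⟨eC, ehC, R, f, ΨC⟩) T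
    ⟨hf, hΨT_anti, hcont_f, hcont_ΨT, fun i => (hcont_e i).2.2.1, hcont_R.continuousOn⟩
    ⟨hf, hΨC_anti, hcont_f, hcont_ΨC, fun i => (hcont_e i).2.2.2, hcont_R.continuousOn⟩
    (fun i t ht => ⟨he_nonneg i t ht, (he_eq i t ht).le⟩)
    (fun t ht s hs i => PacingSystem.thresholdAt_nonneg_of_scaling rfl
      (fun j => hΨα (s j) (hs j) j t ht) fun r R₀ h => h.trans (hfα i r R₀ h))
    hfin hS0 hS0_nonneg
    ⟨⟨hrT, hfCET⟩, ⟨hrC, hfCEC⟩, hIE, hOE, fun i => ⟨hOE_int i, hSE i⟩⟩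
    ⟨⟨hrGT, hfGT⟩, hIGT, hOGT, fun i => ⟨hOGT_int i, hSGT i⟩⟩
    ⟨⟨hrGC, hfGC⟩, hIGC, hOGC, fun i => ⟨hOGC_int i, hSGC i⟩⟩
end
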